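/- (Theorem 3.1, Fourier-space form.) Let ν ∈ (0,1), λ > 0, c > 0, t0 > 0 and β ∈ ℝ with λ² ≠ c²β². Let w = √(λ² - c²β²) ∈ ℂ (principal branch), η₁ = -λ + w, η₂ = -λ - w, and define u* : [t0,∞) → ℂ by u*(t) = ½ (1 + λ/w) E_{ν,1}(η₁ (log(t/t0))^ν) + ½ (1 - λ/w) E_{ν,1}(η₂ (log(t/t0))^ν). Then u*(t0) = 1 and, for every t > t0, (D^ν (D^ν u*))(t) + 2λ (D^ν u*)(t) = -c²β² u*(t), where D^ν is the Caputo-type Hadamard fractional derivative of order ν with base point t0. (That is, u* is the Fourier transform at frequency β of the solution of the time-fractional telegraph equation involving Hadamard derivatives with initial datum δ(x).) -/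

import Mathlib

open MeasureTheory intervalIntegral

/-- The two-parameter Mittag-Leffler function `E_{γ,μ}(z) = ∑ z^k / Γ(γ k + μ)`. -/
noncomputable def mittagLeffler (γ μ : ℝ) (z : ℂ) : ℂ :=
  ∑' k : ℕ, z ^ k / (Real.Gamma (γ * k + μ) : ℂ)

/-- The Caputo-type Hadamard fractional derivative of order `ν ∈ (0,1)` with base
point `t0 > 0`, applied componentwise to a complex-valued function. -/
noncomputable def hadamardCaputoC (ν t0 : ℝ) (u : ℝ → ℂ) (t : ℝ) : ℂ :=
  (1 / (Real.Gamma (1 - ν) : ℂ)) *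
    ∫ τ in t0..t, (((Real.log (t / τ)) ^ (-ν) : ℝ) : ℂ) * ((τ : ℂ) * deriv u τ) / (τ : ℂ)

open Set Filter

/-!
In the variable `x = log (t / t0)` the Hadamard operator becomes the classical Caputo derivative
based at `0`. There `x ↦ E_{ν,1}(η x^ν)` has derivative `η x^{ν-1} E_{ν,ν}(η x^ν)`, whose
fractional integral of order `1 - ν` is computed term by term with the Beta integral and equals
`η E_{ν,1}(η x^ν)`. So these functions are eigenfunctions of `D^ν` with eigenvalue `η`, and the
telegraph equation reduces to its characteristic equation `η² + 2λη + c²β² = 0`, whose roots are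
`η₁` and `η₂`.
-/

section Gamma

lemma rpow_mul_exp_neg_le_Gamma_add_one {R s : ℝ} (hR : 0 ≤ R) (hs : 0 ≤ s) :
    R ^ s * Real.exp (-R) ≤ Real.Gamma (s + 1) := by
  have hconv : IntegrableOn (fun x : ℝ => Real.exp (-x) * x ^ s) (Ioi 0) := by
    simpa using Real.GammaIntegral_convergent (s := s + 1) (by linarith)
  have hsub : Ioi R ⊆ Ioi (0 : ℝ) := Ioi_subset_Ioi hR
  calc R ^ s * Real.exp (-R)
      = ∫ x in Ioi R, R ^ s * Real.exp (-x) := by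
        rw [MeasureTheory.integral_const_mul, integral_exp_neg_Ioi]
    _ ≤ ∫ x in Ioi R, Real.exp (-x) * x ^ s := by
        refine setIntegral_mono_on ((integrableOn_exp_neg_Ioi R).const_mul _)
          (hconv.mono_set hsub) measurableSet_Ioi fun x hx => ?_
        rw [mul_comm]
        gcongr
        exact le_of_lt hx
    _ ≤ ∫ x in Ioi 0, Real.exp (-x) * x ^ s := by
        refine setIntegral_mono_set hconv ?_ hsub.eventuallyLE
        filter_upwards [ae_restrict_mem measurableSet_Ioi] with x hx
        have : 0 < x := hx
        positivity
    _ = Real.Gamma (s + 1) := by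
        rw [Real.Gamma_eq_integral (by linarith), add_sub_cancel_right]

lemma integral_rpow_mul_sub_rpow {a b x : ℝ} (ha : 0 < a) (hb : 0 < b) (hx : 0 < x) :
    ∫ y in 0..x, y ^ (a - 1) * (x - y) ^ (b - 1) =
      x ^ (a + b - 1) * (Real.Gamma a * Real.Gamma b / Real.Gamma (a + b)) := by
  apply Complex.ofReal_injective
  calc ((∫ y in 0..x, y ^ (a - 1) * (x - y) ^ (b - 1) : ℝ) : ℂ)
      = ∫ y in 0..x, (y : ℂ) ^ ((a : ℂ) - 1) * ((x : ℂ) - y) ^ ((b : ℂ) - 1) := by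
        rw [← intervalIntegral.integral_ofReal]
        refine integral_congr_Ioo_of_le hx.le fun y hy => ?_
        push_cast [Complex.ofReal_cpow hy.1.le, Complex.ofReal_cpow (sub_nonneg.2 hy.2.le)]
        rfl
    _ = (x : ℂ) ^ ((a : ℂ) + b - 1) *
          (Complex.Gamma a * Complex.Gamma b / Complex.Gamma (a + b)) := by
        rw [Complex.betaIntegral_scaled a b hx,
          Complex.betaIntegral_eq_Gamma_mul_div _ _ (by simpa) (by simpa)]
    _ = _ := by
        push_cast [Complex.ofReal_cpow hx.le, ← Complex.Gamma_ofReal]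
        rfl

lemma intervalIntegrable_rpow_mul_sub_rpow {a b x : ℝ} (ha : 0 < a) (hb : 0 < b) (hx : 0 < x) :
    IntervalIntegrable (fun y : ℝ => y ^ (a - 1) * (x - y) ^ (b - 1)) volume 0 x := by
  apply intervalIntegrable_of_integral_ne_zero
  rw [integral_rpow_mul_sub_rpow ha hb hx]
  have := Real.Gamma_pos_of_pos ha
  have := Real.Gamma_pos_of_pos hb
  have := Real.Gamma_pos_of_pos (add_pos ha hb)
  positivity

end Gamma

section MittagLeffler

variable {γ : ℝ}

lemma summable_norm_mittagLeffler (hγ : 0 < γ) (μ : ℝ) (z : ℂ) :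
    Summable fun k : ℕ => ‖z ^ k / (Real.Gamma (γ * k + μ) : ℂ)‖ := by
  -- `R ^ s * exp (-R) ≤ Γ(s + 1)` with `R ^ γ = M` beats `‖z‖ ^ k` by a factor `2 ^ k`.
  set M : ℝ := 2 * (‖z‖ + 1)
  set R : ℝ := M ^ γ⁻¹ with hR
  have hM_pos : 0 < M := by positivity
  have hR_pos : 0 < R := by positivity
  have hR_pow (k : ℕ) : R ^ (γ * k) = M ^ k := by
    rw [Real.rpow_mul hR_pos.le, hR, Real.rpow_inv_rpow hM_pos.le hγ.ne', Real.rpow_natCast]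
  refine Summable.of_norm_bounded_eventually_nat
    (g := fun k : ℕ => Real.exp R * R ^ (1 - μ) * (1 / 2 : ℝ) ^ k)
    (summable_geometric_two.mul_left _) ?_
  have hexp_nonneg : ∀ᶠ k : ℕ in atTop, 1 ≤ γ * k + μ :=
    (tendsto_atTop_add_const_right _ μ
      (tendsto_natCast_atTop_atTop.const_mul_atTop hγ)).eventually_ge_atTop 1
  filter_upwards [hexp_nonneg] with k hk
  have hGamma_pos : 0 < Real.Gamma (γ * k + μ) := Real.Gamma_pos_of_pos (by linarith)
  have hGamma : M ^ k * R ^ (μ - 1) * Real.exp (-R) ≤ Real.Gamma (γ * k + μ) := by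
    have h := rpow_mul_exp_neg_le_Gamma_add_one hR_pos.le (sub_nonneg.2 hk)
    rwa [sub_add_cancel, add_sub_assoc, Real.rpow_add hR_pos, hR_pow] at h
  rw [norm_norm, norm_div, norm_pow, Complex.norm_real, Real.norm_of_nonneg hGamma_pos.le,
    div_le_iff₀ hGamma_pos]
  calc ‖z‖ ^ k ≤ (M / 2) ^ k := by gcongr; linarith
    _ = Real.exp R * R ^ (1 - μ) * (1 / 2) ^ k * (M ^ k * R ^ (μ - 1) * Real.exp (-R)) := by
        rw [← neg_sub μ 1, Real.rpow_neg hR_pos.le, Real.exp_neg, div_pow, div_pow, one_pow]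
        field_simp
    _ ≤ _ := by gcongr

lemma hasSum_mittagLeffler (hγ : 0 < γ) (μ : ℝ) (z : ℂ) :
    HasSum (fun k : ℕ => z ^ k / (Real.Gamma (γ * k + μ) : ℂ)) (mittagLeffler γ μ z) :=
  (summable_norm_mittagLeffler hγ μ z).of_norm.hasSum

lemma mittagLeffler_zero (γ μ : ℝ) : mittagLeffler γ μ 0 = 1 / (Real.Gamma μ : ℂ) := by
  rw [mittagLeffler, tsum_eq_single 0 fun k hk => by simp [hk]]
  simp

lemma norm_mittagLeffler_term_le {z : ℂ} {r : ℝ} (hz : ‖z‖ ≤ r) (μ : ℝ) (k : ℕ) :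
    ‖z ^ k / (Real.Gamma (γ * k + μ) : ℂ)‖ ≤ ‖(r : ℂ) ^ k / (Real.Gamma (γ * k + μ) : ℂ)‖ := by
  have hr : ‖(r : ℂ)‖ = r := Complex.norm_of_nonneg ((norm_nonneg z).trans hz)
  rw [norm_div, norm_div, norm_pow, norm_pow, hr]
  gcongr

lemma differentiable_mittagLeffler (hγ : 0 < γ) (μ : ℝ) :
    Differentiable ℂ (mittagLeffler γ μ) := fun z => by
  refine (Complex.differentiableOn_tsum_of_summable_norm
    (summable_norm_mittagLeffler hγ μ ((‖z‖ + 1 : ℝ) : ℂ)) (fun k => by fun_prop)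
    Metric.isOpen_ball fun k w hw => norm_mittagLeffler_term_le ?_ μ k).differentiableAt
    (Metric.isOpen_ball.mem_nhds (x := z) (by simp : z ∈ Metric.ball 0 (‖z‖ + 1)))
  exact (mem_ball_zero_iff.1 hw).le

lemma hasSum_deriv_mittagLeffler (hγ : 0 < γ) (μ : ℝ) (z : ℂ) :
    HasSum (fun k : ℕ => (k + 1) * z ^ k / (Real.Gamma (γ * (k + 1) + μ) : ℂ))
      (deriv (mittagLeffler γ μ) z) := by
  have hsum : HasSum
      (fun k : ℕ => deriv (fun w : ℂ => w ^ k / (Real.Gamma (γ * k + μ) : ℂ)) z)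
      (deriv (mittagLeffler γ μ) z) :=
    Complex.hasSum_deriv_of_summable_norm
      (summable_norm_mittagLeffler hγ μ ((‖z‖ + 1 : ℝ) : ℂ)) (fun k => by fun_prop)
      Metric.isOpen_ball
      (fun k w hw => norm_mittagLeffler_term_le (mem_ball_zero_iff.1 hw).le μ k)
      (by simp : z ∈ Metric.ball 0 (‖z‖ + 1))
  simpa [deriv_div_const] using (hasSum_nat_add_iff' 1).2 hsum

lemma hasDerivAt_mittagLeffler_one (hγ : 0 < γ) (z : ℂ) :
    HasDerivAt (mittagLeffler γ 1) (mittagLeffler γ γ z / γ) z := by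
  have hderiv : deriv (mittagLeffler γ 1) z = mittagLeffler γ γ z / γ := by
    refine (hasSum_deriv_mittagLeffler hγ 1 z).unique ?_
    convert! (hasSum_mittagLeffler hγ γ z).div_const (γ : ℂ) using 2 with k
    have hk : (k + 1 : ℂ) ≠ 0 := by exact_mod_cast k.succ_ne_zero
    have hγ' : (γ : ℂ) ≠ 0 := by exact_mod_cast hγ.ne'
    rw [Real.Gamma_add_one (by positivity), ← mul_add_one]
    push_cast
    field_simp
  exact hderiv ▸ (differentiable_mittagLeffler hγ 1 z).hasDerivAt

end MittagLeffler

section FractionalIntegral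

variable {γ μ a x : ℝ}

lemma setIntegral_norm_const_mul_ofReal {α : Type*} [MeasurableSpace α] {ρ : Measure α}
    {s : Set α} (hs : MeasurableSet s) {f : α → ℝ} (hf : ∀ y ∈ s, 0 ≤ f y) (c : ℂ) :
    ∫ y in s, ‖c * (f y : ℂ)‖ ∂ρ = ‖∫ y in s, c * (f y : ℂ) ∂ρ‖ := by
  rw [MeasureTheory.integral_const_mul, integral_complex_ofReal, norm_mul,
    Complex.norm_of_nonneg (setIntegral_nonneg hs hf), ← MeasureTheory.integral_const_mul]
  refine setIntegral_congr_fun hs fun y hy => ?_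
  rw [norm_mul, Complex.norm_of_nonneg (hf y hy)]

lemma setIntegral_mittagLeffler_term (hγ : 0 < γ) (hμ : 0 < μ) (ha : 0 < a) (hx : 0 < x)
    (η : ℂ) (k : ℕ) :
    ∫ y in Ioc 0 x, η ^ k / (Real.Gamma (γ * k + μ) : ℂ) *
        ((y ^ (γ * k + μ - 1) * (x - y) ^ (a - 1) : ℝ) : ℂ) =
      (Real.Gamma a : ℂ) * ((x ^ (μ + a - 1) : ℝ) : ℂ) *
        ((η * ((x ^ γ : ℝ) : ℂ)) ^ k / (Real.Gamma (γ * k + (μ + a)) : ℂ)) := by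
  have hΓ : (Real.Gamma (γ * k + μ) : ℂ) ≠ 0 := by
    exact_mod_cast (Real.Gamma_pos_of_pos (by positivity)).ne'
  rw [MeasureTheory.integral_const_mul, integral_complex_ofReal, ← integral_of_le hx.le,
    integral_rpow_mul_sub_rpow (by positivity) ha hx, add_assoc, add_sub_assoc,
    Real.rpow_add hx, Real.rpow_mul hx.le, Real.rpow_natCast]
  push_cast
  rw [mul_pow]
  field_simp

lemma hasSum_sub_rpow_mul_mittagLeffler (hγ : 0 < γ) (μ a x : ℝ) (η : ℂ) {y : ℝ} (hy : 0 < y) :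
    HasSum (fun k : ℕ => η ^ k / (Real.Gamma (γ * k + μ) : ℂ) *
        ((y ^ (γ * k + μ - 1) * (x - y) ^ (a - 1) : ℝ) : ℂ))
      ((((x - y) ^ (a - 1) : ℝ) : ℂ) *
        (((y ^ (μ - 1) : ℝ) : ℂ) * mittagLeffler γ μ (η * ((y ^ γ : ℝ) : ℂ)))) := by
  convert! ((hasSum_mittagLeffler hγ μ _).mul_left _).mul_left _ using 2 with k
  rw [add_sub_assoc, Real.rpow_add hy, Real.rpow_mul hy.le, Real.rpow_natCast]
  push_cast
  ring

lemma integral_sub_rpow_mul_mittagLeffler (hγ : 0 < γ) (hμ : 0 < μ) (ha : 0 < a) (hx : 0 < x)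
    (η : ℂ) :
    ∫ y in 0..x, (((x - y) ^ (a - 1) : ℝ) : ℂ) *
        (((y ^ (μ - 1) : ℝ) : ℂ) * mittagLeffler γ μ (η * ((y ^ γ : ℝ) : ℂ))) =
      (Real.Gamma a : ℂ) * ((x ^ (μ + a - 1) : ℝ) : ℂ) *
        mittagLeffler γ (μ + a) (η * ((x ^ γ : ℝ) : ℂ)) := by
  set F : ℕ → ℝ → ℂ := fun k y => η ^ k / (Real.Gamma (γ * k + μ) : ℂ) *
    ((y ^ (γ * k + μ - 1) * (x - y) ^ (a - 1) : ℝ) : ℂ) with hF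
  have hF_integrable (k : ℕ) : IntegrableOn (F k) (Ioc 0 x) :=
    (intervalIntegrable_rpow_mul_sub_rpow (by positivity) ha hx).1.ofReal.const_mul _
  have hF_norm (k : ℕ) : ∫ y in Ioc 0 x, ‖F k y‖ = ‖∫ y in Ioc 0 x, F k y‖ :=
    setIntegral_norm_const_mul_ofReal measurableSet_Ioc (fun y hy =>
      mul_nonneg (Real.rpow_nonneg hy.1.le _) (Real.rpow_nonneg (sub_nonneg.2 hy.2) _)) _
  have hF_summable : Summable fun k => ∫ y in Ioc 0 x, ‖F k y‖ := by
    simp_rw [hF_norm, hF, setIntegral_mittagLeffler_term hγ hμ ha hx, norm_mul _ (_ / _)]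
    exact (summable_norm_mittagLeffler hγ _ _).mul_left _
  have hsum := hasSum_integral_of_summable_integral_norm hF_integrable hF_summable
  simp_rw [hF, setIntegral_mittagLeffler_term hγ hμ ha hx] at hsum
  rw [((hasSum_mittagLeffler hγ _ _).mul_left _).unique hsum, integral_of_le hx.le]
  exact setIntegral_congr_fun measurableSet_Ioc fun y hy =>
    (hasSum_sub_rpow_mul_mittagLeffler hγ μ a x η hy.1).tsum_eq.symm

lemma intervalIntegrable_sub_rpow_mul_mittagLeffler (hγ : 0 < γ) (hμ : 0 < μ) (ha : 0 < a)
    (hx : 0 < x) (η : ℂ) :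
    IntervalIntegrable (fun y : ℝ => (((x - y) ^ (a - 1) : ℝ) : ℂ) *
      (((y ^ (μ - 1) : ℝ) : ℂ) * mittagLeffler γ μ (η * ((y ^ γ : ℝ) : ℂ)))) volume 0 x := by
  have hcont : Continuous fun y : ℝ => mittagLeffler γ μ (η * ((y ^ γ : ℝ) : ℂ)) :=
    (differentiable_mittagLeffler hγ μ).continuous.comp <| continuous_const.mul <|
      Complex.continuous_ofReal.comp (Real.continuous_rpow_const hγ.le)
  have hbeta : IntervalIntegrable (fun y : ℝ => ((y ^ (μ - 1) * (x - y) ^ (a - 1) : ℝ) : ℂ))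
      volume 0 x :=
    (intervalIntegrable_iff_integrableOn_Ioc_of_le hx.le).2
      (intervalIntegrable_rpow_mul_sub_rpow hμ ha hx).1.ofReal
  convert! hbeta.mul_continuousOn hcont.continuousOn using 2 with y
  push_cast
  ring

end FractionalIntegral

section Caputo

/-- The Caputo fractional derivative of order `ν ∈ (0,1)` with base point `0`, of a complex-valued
function on `ℝ`; the operator `hadamardCaputoC` is this one in a logarithmic variable. -/
noncomputable def caputoDeriv (ν : ℝ) (v : ℝ → ℂ) (x : ℝ) : ℂ :=
  (1 / (Real.Gamma (1 - ν) : ℂ)) * ∫ y in 0..x, (((x - y) ^ (-ν) : ℝ) : ℂ) * deriv v y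

/-- The function `y ↦ E_{ν,1}(η y ^ ν)`, which plays for the Caputo derivative of order `ν` the role
of `y ↦ exp (η y)`. -/
noncomputable def fractionalExp (ν : ℝ) (η : ℂ) (y : ℝ) : ℂ :=
  mittagLeffler ν 1 (η * ((y ^ ν : ℝ) : ℂ))

variable {ν x : ℝ}

lemma caputoDeriv_linearCombination {v w : ℝ → ℂ} (hx : 0 ≤ x)
    (hv : ∀ y ∈ Ioo 0 x, DifferentiableAt ℝ v y) (hw : ∀ y ∈ Ioo 0 x, DifferentiableAt ℝ w y)
    (hv_int : IntervalIntegrable (fun y => (((x - y) ^ (-ν) : ℝ) : ℂ) * deriv v y) volume 0 x)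
    (hw_int : IntervalIntegrable (fun y => (((x - y) ^ (-ν) : ℝ) : ℂ) * deriv w y) volume 0 x)
    (a b : ℂ) :
    caputoDeriv ν (fun y => a * v y + b * w y) x =
      a * caputoDeriv ν v x + b * caputoDeriv ν w x := by
  have hderiv : EqOn
      (fun y => (((x - y) ^ (-ν) : ℝ) : ℂ) * deriv (fun y => a * v y + b * w y) y)
      (fun y => a * ((((x - y) ^ (-ν) : ℝ) : ℂ) * deriv v y) +
        b * ((((x - y) ^ (-ν) : ℝ) : ℂ) * deriv w y)) (Ioo 0 x) := fun y hy => by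
    have hcomb := (((hv y hy).hasDerivAt.const_mul a).add ((hw y hy).hasDerivAt.const_mul b)).deriv
    simp only [Pi.add_def] at hcomb
    simp only [hcomb]
    ring
  simp only [caputoDeriv]
  rw [integral_congr_Ioo_of_le hx hderiv,
    intervalIntegral.integral_add (hv_int.const_mul a) (hw_int.const_mul b),
    intervalIntegral.integral_const_mul, intervalIntegral.integral_const_mul]
  ring

lemma fractionalExp_zero (hν : ν ≠ 0) (η : ℂ) : fractionalExp ν η 0 = 1 := by
  simp [fractionalExp, Real.zero_rpow hν, mittagLeffler_zero]

lemma hasDerivAt_fractionalExp (hν : 0 < ν) (η : ℂ) {y : ℝ} (hy : 0 < y) :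
    HasDerivAt (fractionalExp ν η)
      (η * (((y ^ (ν - 1) : ℝ) : ℂ) * mittagLeffler ν ν (η * ((y ^ ν : ℝ) : ℂ)))) y := by
  have hrpow : HasDerivAt (fun y : ℝ => η * ((y ^ ν : ℝ) : ℂ))
      (η * ((ν * y ^ (ν - 1) : ℝ) : ℂ)) y :=
    ((Real.hasDerivAt_rpow_const (Or.inl hy.ne')).ofReal_comp).const_mul η
  convert! (hasDerivAt_mittagLeffler_one hν _).comp y hrpow using 1
  have hν' : (ν : ℂ) ≠ 0 := by exact_mod_cast hν.ne'
  push_cast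
  field_simp

lemma sub_rpow_mul_deriv_fractionalExp (hν : 0 < ν) (η : ℂ) :
    EqOn (fun y => (((x - y) ^ (-ν) : ℝ) : ℂ) * deriv (fractionalExp ν η) y)
      (fun y => η * ((((x - y) ^ (1 - ν - 1) : ℝ) : ℂ) *
        (((y ^ (ν - 1) : ℝ) : ℂ) * mittagLeffler ν ν (η * ((y ^ ν : ℝ) : ℂ))))) (Ioo 0 x) :=
  fun y hy => by
    simp only [(hasDerivAt_fractionalExp hν η hy.1).deriv, show 1 - ν - 1 = -ν by ring]
    ring

lemma intervalIntegrable_sub_rpow_mul_deriv_fractionalExp (hν : ν ∈ Ioo (0 : ℝ) 1) (hx : 0 < x)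
    (η : ℂ) :
    IntervalIntegrable (fun y => (((x - y) ^ (-ν) : ℝ) : ℂ) * deriv (fractionalExp ν η) y)
      volume 0 x := by
  rw [intervalIntegrable_congr_uIoo (by
    simpa only [uIoo_of_le hx.le] using sub_rpow_mul_deriv_fractionalExp hν.1 η)]
  exact (intervalIntegrable_sub_rpow_mul_mittagLeffler hν.1 hν.1 (sub_pos.2 hν.2) hx η).const_mul η

lemma caputoDeriv_fractionalExp (hν : ν ∈ Ioo (0 : ℝ) 1) (hx : 0 < x) (η : ℂ) :
    caputoDeriv ν (fractionalExp ν η) x = η * fractionalExp ν η x := by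
  have hΓ : (Real.Gamma (1 - ν) : ℂ) ≠ 0 := by
    exact_mod_cast (Real.Gamma_pos_of_pos (sub_pos.2 hν.2)).ne'
  rw [caputoDeriv, integral_congr_Ioo_of_le hx.le (sub_rpow_mul_deriv_fractionalExp hν.1 η),
    intervalIntegral.integral_const_mul,
    integral_sub_rpow_mul_mittagLeffler hν.1 hν.1 (sub_pos.2 hν.2) hx, add_sub_cancel, sub_self,
    Real.rpow_zero, fractionalExp]
  push_cast
  field_simp

end Caputo

section Hadamard

variable {ν t0 t : ℝ}

lemma hadamardCaputoC_congr {u v : ℝ → ℂ} (ht : t0 ≤ t) (huv : EqOn u v (Ioo t0 t)) :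
    hadamardCaputoC ν t0 u t = hadamardCaputoC ν t0 v t := by
  rw [hadamardCaputoC, hadamardCaputoC]
  congr 1
  refine integral_congr_Ioo_of_le ht fun τ hτ => ?_
  simp only [(huv.eventuallyEq_of_mem (Ioo_mem_nhds hτ.1 hτ.2)).deriv_eq]

lemma hasDerivAt_log_div {s : ℝ} (ht0 : t0 ≠ 0) (hs : s ≠ 0) :
    HasDerivAt (fun s => Real.log (s / t0)) s⁻¹ s := by
  convert! ((hasDerivAt_id s).div_const t0).log (div_ne_zero hs ht0) using 1
  simp only [id]
  field_simp

lemma deriv_comp_log_div (v : ℝ → ℂ) {s : ℝ} (ht0 : 0 < t0) (hs : 0 < s) :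
    deriv (fun s => v (Real.log (s / t0))) s = s⁻¹ • deriv v (Real.log (s / t0)) := by
  by_cases hv : DifferentiableAt ℝ v (Real.log (s / t0))
  · exact (hv.hasDerivAt.scomp s (hasDerivAt_log_div ht0.ne' hs.ne')).deriv
  · have hu : ¬DifferentiableAt ℝ (fun s => v (Real.log (s / t0))) s := fun hu => hv <| by
      have hs_eq : t0 * Real.exp (Real.log (s / t0)) = s := by
        rw [Real.exp_log (div_pos hs ht0), mul_div_cancel₀ _ ht0.ne']
      have hv_eq : v = (fun s => v (Real.log (s / t0))) ∘ fun y => t0 * Real.exp y := by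
        funext y
        simp [ht0.ne']
      rw [hv_eq]
      exact DifferentiableAt.comp _ (by rwa [hs_eq]) (by fun_prop)
    rw [deriv_zero_of_not_differentiableAt hv, deriv_zero_of_not_differentiableAt hu, smul_zero]

lemma hadamardCaputoC_comp_log_div (v : ℝ → ℂ) (ht0 : 0 < t0) (ht : 0 < t) :
    hadamardCaputoC ν t0 (fun s => v (Real.log (s / t0))) t =
      caputoDeriv ν v (Real.log (t / t0)) := by
  have hpos : ∀ s ∈ uIcc t0 t, 0 < s := fun s hs => (lt_min ht0 ht).trans_le hs.1
  have hsubst := integral_deriv_smul_comp_of_deriv_nonneg (a := t0) (b := t)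
    (f := fun s => Real.log (s / t0)) (f' := fun s => s⁻¹)
    (g := fun y => (((Real.log (t / t0) - y) ^ (-ν) : ℝ) : ℂ) * deriv v y)
    (fun s hs => (hasDerivAt_log_div ht0.ne' (hpos s hs).ne').continuousAt.continuousWithinAt)
    (fun s hs => hasDerivAt_log_div ht0.ne' (hpos s (Ioo_subset_Icc_self hs)).ne')
    (fun s hs => inv_nonneg.2 (hpos s (Ioo_subset_Icc_self hs)).le)
  simp only [div_self ht0.ne', Real.log_one] at hsubst
  rw [hadamardCaputoC, caputoDeriv, ← hsubst]
  congr 1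
  refine integral_congr fun s hs => ?_
  have hs0 : 0 < s := hpos s hs
  have hs_ne : (s : ℂ) ≠ 0 := by exact_mod_cast hs0.ne'
  have hlog : Real.log (t / s) = Real.log (t / t0) - Real.log (s / t0) := by
    rw [← Real.log_div (by positivity) (by positivity), div_div_div_cancel_right₀ ht0.ne']
  simp only [deriv_comp_log_div v ht0 hs0, hlog, Function.comp_apply, Complex.real_smul]
  push_cast
  field_simp

lemma hadamardCaputoC_fractionalExp_linearCombination (hν : ν ∈ Ioo (0 : ℝ) 1)
    (ht0 : 0 < t0) (ht : t0 < t) (a b η₁ η₂ : ℂ) :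
    hadamardCaputoC ν t0 (fun s => a * fractionalExp ν η₁ (Real.log (s / t0)) +
        b * fractionalExp ν η₂ (Real.log (s / t0))) t =
      a * η₁ * fractionalExp ν η₁ (Real.log (t / t0)) +
        b * η₂ * fractionalExp ν η₂ (Real.log (t / t0)) := by
  have hx : 0 < Real.log (t / t0) := Real.log_pos ((one_lt_div ht0).2 ht)
  have hdiff (η : ℂ) : ∀ y ∈ Ioo 0 (Real.log (t / t0)),
      DifferentiableAt ℝ (fractionalExp ν η) y :=
    fun y hy => (hasDerivAt_fractionalExp hν.1 η hy.1).differentiableAt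
  rw [hadamardCaputoC_comp_log_div (fun y => a * fractionalExp ν η₁ y + b * fractionalExp ν η₂ y)
      ht0 (ht0.trans ht),
    caputoDeriv_linearCombination hx.le (hdiff η₁) (hdiff η₂)
      (intervalIntegrable_sub_rpow_mul_deriv_fractionalExp hν hx η₁)
      (intervalIntegrable_sub_rpow_mul_deriv_fractionalExp hν hx η₂),
    caputoDeriv_fractionalExp hν hx, caputoDeriv_fractionalExp hν hx, mul_assoc, mul_assoc]

lemma hadamardCaputoC_hadamardCaputoC_fractionalExp_linearCombination (hν : ν ∈ Ioo (0 : ℝ) 1)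
    (ht0 : 0 < t0) (ht : t0 < t) (a b η₁ η₂ : ℂ) :
    hadamardCaputoC ν t0 (hadamardCaputoC ν t0 fun s =>
        a * fractionalExp ν η₁ (Real.log (s / t0)) +
          b * fractionalExp ν η₂ (Real.log (s / t0))) t =
      a * η₁ ^ 2 * fractionalExp ν η₁ (Real.log (t / t0)) +
        b * η₂ ^ 2 * fractionalExp ν η₂ (Real.log (t / t0)) := by
  rw [hadamardCaputoC_congr ht.le fun s hs =>
      hadamardCaputoC_fractionalExp_linearCombination hν ht0 hs.1 a b η₁ η₂,
    hadamardCaputoC_fractionalExp_linearCombination hν ht0 ht]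
  ring

end Hadamard

theorem hadamard_fractional_telegraph_fourier_general
    {ν t0 : ℝ} (hν : ν ∈ Ioo (0 : ℝ) 1) (ht0 : 0 < t0) {p q a b η₁ η₂ : ℂ}
    (hη₁ : η₁ ^ 2 + p * η₁ + q = 0) (hη₂ : η₂ ^ 2 + p * η₂ + q = 0) {u : ℝ → ℂ}
    (hu : u = fun t =>
      a * mittagLeffler ν 1 (η₁ * ((Real.log (t / t0) ^ ν : ℝ) : ℂ)) +
        b * mittagLeffler ν 1 (η₂ * ((Real.log (t / t0) ^ ν : ℝ) : ℂ))) :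
    u t0 = a + b ∧ ∀ t, t0 < t →
      hadamardCaputoC ν t0 (hadamardCaputoC ν t0 u) t + p * hadamardCaputoC ν t0 u t =
        -q * u t := by
  replace hu : u = fun t => a * fractionalExp ν η₁ (Real.log (t / t0)) +
      b * fractionalExp ν η₂ (Real.log (t / t0)) := hu
  subst hu
  refine ⟨?_, fun t ht => ?_⟩
  · simp only [div_self ht0.ne', Real.log_one, fractionalExp_zero hν.1.ne', mul_one]
  · rw [hadamardCaputoC_hadamardCaputoC_fractionalExp_linearCombination hν ht0 ht,
      hadamardCaputoC_fractionalExp_linearCombination hν ht0 ht]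
    linear_combination a * fractionalExp ν η₁ (Real.log (t / t0)) * hη₁ +
      b * fractionalExp ν η₂ (Real.log (t / t0)) * hη₂

/-- **Theorem 3.1, Fourier-space form.** The function
`u*(t) = ½(1+λ/w) E_{ν,1}(η₁ log^ν(t/t0)) + ½(1-λ/w) E_{ν,1}(η₂ log^ν(t/t0))`,
with `w = √(λ² - c²β²)`, `η₁ = -λ + w`, `η₂ = -λ - w`, satisfies `u*(t0) = 1` and the
time-fractional telegraph equation (in Fourier space)
`D^ν D^ν u* + 2λ D^ν u* = -c²β² u*` for `t > t0`, where `D^ν` is the Caputo-type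
Hadamard derivative of order `ν` with base point `t0`. -/
theorem hadamard_fractional_telegraph_fourier
    (ν lam c t0 β : ℝ) (hν : ν ∈ Set.Ioo (0 : ℝ) 1) (hlam : 0 < lam) (hc : 0 < c)
    (ht0 : 0 < t0) (hne : lam ^ 2 ≠ c ^ 2 * β ^ 2)
    (w η₁ η₂ : ℂ)
    (hw : w = ((lam ^ 2 - c ^ 2 * β ^ 2 : ℝ) : ℂ) ^ (1 / 2 : ℂ))
    (hη₁ : η₁ = -(lam : ℂ) + w) (hη₂ : η₂ = -(lam : ℂ) - w)
    (u : ℝ → ℂ)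
    (hu : u = fun t =>
      (1 / 2 : ℂ) * (1 + (lam : ℂ) / w) *
          mittagLeffler ν 1 (η₁ * (((Real.log (t / t0)) ^ ν : ℝ) : ℂ)) +
        (1 / 2 : ℂ) * (1 - (lam : ℂ) / w) *
          mittagLeffler ν 1 (η₂ * (((Real.log (t / t0)) ^ ν : ℝ) : ℂ))) :
    u t0 = 1 ∧
      ∀ t, t0 < t →
        hadamardCaputoC ν t0 (fun τ => hadamardCaputoC ν t0 u τ) t +
            2 * (lam : ℂ) * hadamardCaputoC ν t0 u t
          = -((c : ℂ) ^ 2 * (β : ℂ) ^ 2) * u t := by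
  have hw_sq : w ^ 2 = (lam : ℂ) ^ 2 - (c : ℂ) ^ 2 * (β : ℂ) ^ 2 := by
    simp [hw]
  have hsol := hadamard_fractional_telegraph_fourier_general hν ht0
    (p := 2 * lam) (q := (c : ℂ) ^ 2 * (β : ℂ) ^ 2)
    (by rw [hη₁]; linear_combination hw_sq) (by rw [hη₂]; linear_combination hw_sq) hu
  exact ⟨hsol.1.trans (by ring), hsol.2⟩
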